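/- arXiv:1907.01210 — 2 statements merged into one kernel-verified Lean document; each statement's English description precedes it below -/
import Mathlib

section
/- If m ≡ 1 or 2 (mod 4) and m, n ≥ 3, then γ_p(f_{n×m}) = 2·⌈(nm - n)/4⌉. -/
abbrev FlowerVert (n m : ℕ) := ZMod n ⊕ ZMod n × Fin (m - 2)

def flowerRel (n m : ℕ) : FlowerVert n m → FlowerVert n m → Prop
  | Sum.inl i, Sum.inl i' => i' = i + 1
  | Sum.inl i, Sum.inr (i', j) => (i' = i ∧ j.val = 0) ∨ (i = i' + 1 ∧ j.val = m - 3)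
  | Sum.inr (i, j), Sum.inr (i', j') => i' = i ∧ j'.val = j.val + 1
  | _, _ => False

/-- The flower graph `f_{n×m}`. -/
def flowerGraph (n m : ℕ) : SimpleGraph (FlowerVert n m) :=
  SimpleGraph.fromRel (flowerRel n m)

/-- `D` is a paired dominating set of `G`. -/
def IsPairedDominating {V : Type*} (G : SimpleGraph V) (D : Set V) : Prop :=
  (∀ v ∉ D, ∃ u ∈ D, G.Adj u v) ∧
  ∃ M : G.Subgraph, M.verts = D ∧ M.IsMatching

/-- `D` is a `k`-distance paired dominating set of `G`. -/
def IsKDistPairedDominating {V : Type*} (G : SimpleGraph V) (k : ℕ) (D : Set V) : Prop :=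
  (∀ v ∉ D, ∃ u ∈ D, G.edist u v ≤ k) ∧
  ∃ M : G.Subgraph, M.verts = D ∧ M.IsMatching

/-- The paired domination number `γ_p(G)`. -/
noncomputable def pairedDomNum {V : Type*} (G : SimpleGraph V) : ℕ :=
  sInf {c | ∃ D : Set V, IsPairedDominating G D ∧ D.ncard = c}

/-- The `k`-distance paired domination number `γ_p^k(G)`. -/
noncomputable def kDistPairedDomNum {V : Type*} (G : SimpleGraph V) (k : ℕ) : ℕ :=
  sInf {c | ∃ D : Set V, IsKDistPairedDominating G k D ∧ D.ncard = c}

/-- The `k`-distance domination number `γ^k(G)`. -/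
noncomputable def kDistDomNum {V : Type*} (G : SimpleGraph V) (k : ℕ) : ℕ :=
  sInf {c | ∃ D : Set V, (∀ v ∉ D, ∃ u ∈ D, G.edist u v ≤ k) ∧ D.ncard = c}

open Finset in
/-- Covering an interval of `4k-3` integers by blocks of length four needs `k` blocks. -/
theorem cover_card (k a : ℕ) (Q : Finset ℕ)
    (h : ∀ j, a ≤ j → j < a + (4 * k - 3) → ∃ e ∈ Q, j ≤ e + 2 ∧ e ≤ j + 1) : k ≤ #Q := by
  have hsub : Finset.Ico a (a + (4 * k - 3)) ⊆ Q.biUnion (fun e => Finset.Ico (e - 1) (e + 3)) := by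
    intro j hj
    rw [Finset.mem_Ico] at hj
    obtain ⟨e, he, h1, h2⟩ := h j hj.1 hj.2
    rw [Finset.mem_biUnion]
    exact ⟨e, he, by rw [Finset.mem_Ico]; omega⟩
  have h1 := Finset.card_le_card hsub
  have h2 : #(Q.biUnion (fun e => Finset.Ico (e - 1) (e + 3))) ≤ #Q * 4 := by
    by_cases h0 : 0 ∈ Q
    · apply Finset.card_biUnion_le_card_mul
      intro e _
      rw [Nat.card_Ico]; omega
    · apply Finset.card_biUnion_le_card_mul
      intro e _
      rw [Nat.card_Ico]; omega
  rw [Nat.card_Ico] at h1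
  omega

/-- Position `j` on the `i`-th petal cycle. -/
def petalPos (n m : ℕ) (i : ZMod n) (j : ℕ) : FlowerVert n m :=
  if j = 0 then Sum.inl i else if h : j - 1 < m - 2 then Sum.inr (i, ⟨j - 1, h⟩) else Sum.inl (i + 1)

/-- Successor position on a petal cycle. -/
def petalNext (m j : ℕ) : ℕ := if j = m - 1 then 0 else j + 1

theorem flower_adj_edge (n m : ℕ) (hm : 3 ≤ m) (v w : FlowerVert n m)
    (h : (flowerGraph n m).Adj v w) :
    ∃ (i : ZMod n) (j : ℕ), j < m ∧
      s(v, w) = s(petalPos n m i j, petalPos n m i (petalNext m j)) := by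
  have key : ∀ v w : FlowerVert n m, flowerRel n m v w → ∃ (i : ZMod n) (j : ℕ), j < m ∧
      s(v, w) = s(petalPos n m i j, petalPos n m i (petalNext m j)) := by
    rintro (i | ⟨i, x⟩) (i' | ⟨i', x'⟩) hr
    · simp only [flowerRel] at hr
      refine ⟨i, m - 1, by omega, ?_⟩
      have h1 : petalPos n m i (m - 1) = Sum.inl (i + 1) := by
        unfold petalPos; rw [if_neg (by omega), dif_neg (by omega)]
      have h2 : petalNext m (m - 1) = 0 := by simp [petalNext]
      rw [h1, h2, hr, Sym2.eq_swap]; simp [petalPos]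
    · simp only [flowerRel] at hr
      rcases hr with ⟨h1, h2⟩ | ⟨h1, h2⟩
      · refine ⟨i, 0, by omega, ?_⟩
        have h3 : petalNext m 0 = 1 := by unfold petalNext; rw [if_neg (by omega)]
        have h4 : petalPos n m i 1 = Sum.inr (i', x') := by
          unfold petalPos; rw [if_neg (by omega), dif_pos (by omega)]
          subst h1; congr; omega
        rw [h3, h4]; simp [petalPos]
      · refine ⟨i', m - 2, by omega, ?_⟩
        have h3 : petalNext m (m - 2) = m - 1 := by unfold petalNext; rw [if_neg (by omega)]; omega
        have h4 : petalPos n m i' (m - 2) = Sum.inr (i', x') := by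
          unfold petalPos; rw [if_neg (by omega), dif_pos (by omega)]
          congr; omega
        have h5 : petalPos n m i' (m - 1) = Sum.inl i := by
          unfold petalPos; rw [if_neg (by omega), dif_neg (by omega), h1]
        rw [h3, h4, h5, Sym2.eq_swap]
    · simp [flowerRel] at hr
    · simp only [flowerRel] at hr
      obtain ⟨h1, h2⟩ := hr
      have hx := x.2
      have hx' := x'.2
      refine ⟨i, x.val + 1, by omega, ?_⟩
      have h3 : petalNext m (x.val + 1) = x.val + 2 := by unfold petalNext; rw [if_neg (by omega)]
      have h4 : petalPos n m i (x.val + 1) = Sum.inr (i, x) := by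
        unfold petalPos; rw [if_neg (by omega), dif_pos (by omega)]
        congr 
      have h5 : petalPos n m i (x.val + 2) = Sum.inr (i', x') := by
        unfold petalPos; rw [if_neg (by omega), dif_pos (by omega)]
        subst h1; congr; omega
      rw [h3, h4, h5]
  unfold flowerGraph at h
  rw [SimpleGraph.fromRel_adj] at h
  rcases h.2 with h | h
  · exact key v w h
  · obtain ⟨i, j, hj, he⟩ := key w v h
    exact ⟨i, j, hj, by rw [← he, Sym2.eq_swap]⟩

/-- Decomposition of a matching of the flower into petal cycles. -/
theorem flower_matching_decomp (n m : ℕ) (hn : 3 ≤ n) (hm : 3 ≤ m) (M : (flowerGraph n m).Subgraph)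
    (hM : M.IsMatching) :
    ∃ P : ZMod n → Finset ℕ,
      (∀ i j, j ∈ P i → petalPos n m i j ∈ M.verts ∧ petalPos n m i (petalNext m j) ∈ M.verts) ∧
      (∀ i j, j ∈ P i → j < m) ∧
      (∀ v ∈ M.verts, ∃ i, ∃ j ∈ P i, v = petalPos n m i j ∨ v = petalPos n m i (petalNext m j)) ∧
      (∀ [Fintype (ZMod n)], 2 * ∑ i, (P i).card ≤ M.verts.ncard) := by
  classical
  have : NeZero n := ⟨by omega⟩
  choose fi fj hf1 hf2 using fun (e : {e : Sym2 (FlowerVert n m) // e ∈ M.edgeSet}) => by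
    have : ∃ (i : ZMod n) (j : ℕ), j < m ∧
      e.1 = s(petalPos n m i j, petalPos n m i (petalNext m j)) := by
      obtain ⟨e, he⟩ := e
      induction e with
      | _ v w =>
        exact flower_adj_edge n m hm v w (M.adj_sub he)
    exact this
  have hmem : ∀ e, petalPos n m (fi e) (fj e) ∈ M.verts ∧
      petalPos n m (fi e) (petalNext m (fj e)) ∈ M.verts := by
    intro e
    have h2 := e.2
    rw [hf2 e] at h2
    have h3 : M.Adj _ _ := h2
    exact ⟨h3.fst_mem, h3.snd_mem⟩
  refine ⟨fun i => (Finset.univ.filter (fun e => fi e = i)).image fj, ?_, ?_, ?_, ?_⟩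
  · intro i j hj
    simp only [Finset.mem_image, Finset.mem_filter, Finset.mem_univ, true_and] at hj
    obtain ⟨e, rfl, rfl⟩ := hj
    exact hmem e
  · intro i j hj
    simp only [Finset.mem_image, Finset.mem_filter, Finset.mem_univ, true_and] at hj
    obtain ⟨e, rfl, rfl⟩ := hj
    exact hf1 e
  · intro v hv
    obtain ⟨w, hw, _⟩ := hM hv
    have he : s(v, w) ∈ M.edgeSet := hw
    refine ⟨fi ⟨_, he⟩, fj ⟨_, he⟩, ?_, ?_⟩
    · simp only [Finset.mem_image, Finset.mem_filter, Finset.mem_univ, true_and]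
      exact ⟨_, rfl, rfl⟩
    · have h2 := hf2 ⟨_, he⟩
      simp only [Sym2.eq_iff] at h2
      tauto
  · intro _
    have h1 : ∑ i, ((Finset.univ.filter (fun e => fi e = i)).image fj).card ≤
        ∑ i, (Finset.univ.filter (fun e => fi e = i)).card :=
      Finset.sum_le_sum fun i _ => Finset.card_image_le
    have h2 : ∑ i, (Finset.univ.filter (fun e => fi e = i)).card =
        (Finset.univ : Finset {e : Sym2 (FlowerVert n m) // e ∈ M.edgeSet}).card :=
      (Finset.card_eq_sum_card_fiberwise (fun e _ => Finset.mem_coe.2 (Finset.mem_univ _))).symm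
    have h3 : 2 * (Finset.univ : Finset {e : Sym2 (FlowerVert n m) // e ∈ M.edgeSet}).card ≤
        (Finset.univ : Finset M.verts).card := by
      apply Finset.mul_card_image_le_card_of_maps_to (f := hM.toEdge)
      · intro a _; exact Finset.mem_univ _
      · rintro ⟨e, he⟩ _
        induction e with
        | _ v w =>
          have hvw : M.Adj v w := he
          have hne : v ≠ w := hvw.ne
          have hne2 : (⟨v, hvw.fst_mem⟩ : M.verts) ≠ ⟨w, hvw.snd_mem⟩ := by
            simpa using hne
          have e1 := hM.toEdge_eq_of_adj hvw
          have e2 := hM.toEdge_eq_toEdge_of_adj hvw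
          refine (Finset.card_pair hne2).symm.le.trans (Finset.card_le_card ?_)
          intro x hx
          rw [Finset.mem_insert, Finset.mem_singleton] at hx
          rw [Finset.mem_filter]
          refine ⟨Finset.mem_univ _, ?_⟩
          rcases hx with rfl | rfl
          · exact e1
          · rw [← e2]; exact e1
    have h4 : (Finset.univ : Finset M.verts).card = M.verts.ncard := by
      rw [Finset.card_univ, ← Nat.card_eq_fintype_card (α := M.verts)]; rfl
    have h5 := (Nat.mul_le_mul_left 2 (h1.trans h2.le)).trans (h3.trans h4.le)
    refine le_trans (le_of_eq ?_) h5
    congr!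

set_option maxHeartbeats 1000000 in
theorem flower_lower (n m k : ℕ) (hn : 3 ≤ n) (hk : 1 ≤ k) (hm : m = 4 * k + 1 ∨ m = 4 * k + 2)
    (D : Set (FlowerVert n m)) (hD : IsPairedDominating (flowerGraph n m) D) :
    2 * (n * k) ≤ D.ncard ∧ (m = 4 * k + 2 → 2 * (n * k + (n + 3) / 4) ≤ D.ncard) := by
  classical
  have : NeZero n := ⟨by omega⟩
  obtain ⟨hdom, M, rfl, hM⟩ := hD
  obtain ⟨P, hPD, hPm, hcov, hcard⟩ := flower_matching_decomp n m hn (by omega) M hM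
  specialize hcard
  have hinr : ∀ i x, Sum.inr (i, x) ∈ M.verts → x.val + 1 ∈ P i ∨ x.val ∈ P i := by
    intro i x hx
    obtain ⟨i', j, hj, h | h⟩ := hcov _ hx
    · unfold petalPos at h
      split_ifs at h with h1 h2
      simp only [Sum.inr.injEq, Prod.mk.injEq] at h
      obtain ⟨rfl, rfl⟩ := h
      left
      convert hj using 1
      simp only; omega
    · unfold petalPos petalNext at h
      split_ifs at h with h1 h2 h3
      · contradiction
      · simp only [Sum.inr.injEq, Prod.mk.injEq] at h
        obtain ⟨rfl, rfl⟩ := h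
        right
        simpa using hj
  have hinl : ∀ i, Sum.inl i ∈ M.verts →
      (0 ∈ P i ∨ m - 1 ∈ P i) ∨ (m - 2 ∈ P (i - 1) ∨ m - 1 ∈ P (i - 1)) := by
    intro i hx
    obtain ⟨i', j, hj, h | h⟩ := hcov _ hx
    · have hjm := hPm _ _ hj
      unfold petalPos at h
      split_ifs at h with h1 h2
      · simp only [Sum.inl.injEq] at h
        subst h h1; tauto
      · simp only [Sum.inl.injEq] at h
        subst h
        have : j = m - 1 := by omega
        subst this
        right; right; simpa using hj
    · have hjm := hPm _ _ hj
      unfold petalNext at h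
      split_ifs at h with h0
      · subst h0
        simp only [petalPos, if_true, Sum.inl.injEq] at h
        subst h; tauto
      · unfold petalPos at h
        rw [if_neg (by omega)] at h
        split_ifs at h with h2
        · simp only [Sum.inl.injEq] at h
          subst h
          have : j = m - 2 := by omega
          subst this
          right; left; simpa using hj
  -- end conditions from edges
  have hposA : ∀ i, 0 ∈ P i → Sum.inl i ∈ M.verts := by
    intro i h
    simpa [petalPos] using (hPD i 0 h).1
  have hposB : ∀ i, m - 2 ∈ P i → Sum.inl (i + 1) ∈ M.verts := by
    intro i h
    have := (hPD i _ h).2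
    unfold petalNext at this
    rw [if_neg (by omega)] at this
    unfold petalPos at this
    rwa [if_neg (by omega), dif_neg (by omega)] at this
  -- domination of petal vertices
  have hdomv : ∀ i j, 1 ≤ j → j + 2 ≤ m →
      (∃ e ∈ P i, e + 1 < m ∧ j ≤ e + 2 ∧ e ≤ j + 1) ∨ (j = 1 ∧ Sum.inl i ∈ M.verts) ∨
        (j + 2 = m ∧ Sum.inl (i + 1) ∈ M.verts) := by
    intro i j h1 h2
    by_cases hv : (Sum.inr (i, ⟨j - 1, by omega⟩) : FlowerVert n m) ∈ M.verts
    · left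
      rcases hinr _ _ hv with h | h
      · exact ⟨_, h, by simp only; omega, by simp only; omega, by simp only; omega⟩
      · exact ⟨_, h, by simp only; omega, by simp only; omega, by simp only; omega⟩
    · obtain ⟨u, hu, hadj⟩ := hdom _ hv
      unfold flowerGraph at hadj
      rw [SimpleGraph.fromRel_adj] at hadj
      obtain ⟨-, hadj⟩ := hadj
      rcases u with i' | ⟨i', x⟩
      · simp only [flowerRel, or_false] at hadj
        rcases hadj with ⟨rfl, h⟩ | ⟨rfl, h⟩
        · right; left; exact ⟨by omega, hu⟩
        · right; right; exact ⟨by omega, hu⟩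
      · left
        have hx := x.2
        simp only [flowerRel] at hadj
        have hi : i' = i := by
          rcases hadj with h | h
          · exact h.1.symm
          · exact h.1
        subst hi
        have hx2 : j - 1 = x.val + 1 ∨ x.val = j - 1 + 1 := by tauto
        rcases hinr _ _ hu with h | h
        · exact ⟨_, h, by omega, by omega, by omega⟩
        · exact ⟨_, h, by omega, by omega, by omega⟩
  have hPk : ∀ i, k ≤ (P i).card := by
    intro i
    apply cover_card k 2
    intro j h1 h2
    rcases hdomv i j (by omega) (by omega) with ⟨e, he, -, h3, h4⟩ | h | h
    · exact ⟨e, he, h3, h4⟩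
    · omega
    · omega
  have hsum : n * k ≤ ∑ i, (P i).card := by
    calc n * k = ∑ _i : ZMod n, k := by simp [ZMod.card]
      _ ≤ _ := Finset.sum_le_sum fun i _ => hPk i
  refine ⟨by omega, fun hm2 => ?_⟩
  have herase : ∀ i e, e ∈ P i → k ≤ ((P i).erase e).card → k + 1 ≤ (P i).card := by
    intro i e he h
    rw [Finset.card_erase_of_mem he] at h
    have := Finset.card_pos.2 ⟨e, he⟩
    omega
  have hS1 : ∀ i, m - 1 ∈ P i → k + 1 ≤ (P i).card := by
    intro i h
    apply herase i _ h
    apply cover_card k 2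
    intro j h1 h2
    rcases hdomv i j (by omega) (by omega) with ⟨e, he, h0, h3, h4⟩ | h | h
    · exact ⟨e, Finset.mem_erase.2 ⟨by omega, he⟩, h3, h4⟩
    · omega
    · omega
  have hS2 : ∀ i, 0 ∈ P i → k + 1 ≤ (P i).card := by
    intro i h
    apply herase i _ h
    apply cover_card k 3
    intro j h1 h2
    rcases hdomv i j (by omega) (by omega) with ⟨e, he, h0, h3, h4⟩ | h | h
    · exact ⟨e, Finset.mem_erase.2 ⟨by omega, he⟩, h3, h4⟩
    · omega
    · omega
  have hS3 : ∀ i, m - 2 ∈ P i → k + 1 ≤ (P i).card := by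
    intro i h
    apply herase i _ h
    apply cover_card k 2
    intro j h1 h2
    rcases hdomv i j (by omega) (by omega) with ⟨e, he, h0, h3, h4⟩ | h | h
    · exact ⟨e, Finset.mem_erase.2 ⟨by omega, he⟩, h3, h4⟩
    · omega
    · omega
  have hS4 : ∀ i, 1 ∈ P i → Sum.inl (i + 1) ∉ M.verts → k + 1 ≤ (P i).card := by
    intro i h hB
    apply herase i _ h
    apply cover_card k 4
    intro j h1 h2
    rcases hdomv i j (by omega) (by omega) with ⟨e, he, h0, h3, h4⟩ | h | h
    · exact ⟨e, Finset.mem_erase.2 ⟨by omega, he⟩, h3, h4⟩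
    · omega
    · exact absurd h.2 hB
  have hS5 : ∀ i, m - 3 ∈ P i → Sum.inl i ∉ M.verts → k + 1 ≤ (P i).card := by
    intro i h hB
    apply herase i _ h
    apply cover_card k 1
    intro j h1 h2
    rcases hdomv i j (by omega) (by omega) with ⟨e, he, h0, h3, h4⟩ | h | h
    · exact ⟨e, Finset.mem_erase.2 ⟨by omega, he⟩, h3, h4⟩
    · exact absurd h.2 hB
    · omega
  set S : Finset (ZMod n) := Finset.univ.filter (fun i => k + 1 ≤ (P i).card) with hSdef
  have hSm : ∀ i, k + 1 ≤ (P i).card → i ∈ S := by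
    intro i h; rw [hSdef, Finset.mem_filter]; exact ⟨Finset.mem_univ _, h⟩
  have hU : ∀ i, Sum.inl i ∈ M.verts → i ∈ S ∨ i - 1 ∈ S := by
    intro i h
    rcases hinl i h with (h | h) | (h | h)
    · exact Or.inl (hSm _ (hS2 _ h))
    · exact Or.inl (hSm _ (hS1 _ h))
    · exact Or.inr (hSm _ (hS3 _ h))
    · exact Or.inr (hSm _ (hS1 _ h))
  have hall : ∀ j : ZMod n, j + 1 ∈ S ∨ j ∈ S ∨ j - 1 ∈ S ∨ j - 1 - 1 ∈ S := by
    intro j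
    by_cases hv : (Sum.inl j : FlowerVert n m) ∈ M.verts
    · exact (hU j hv).elim (fun h => Or.inr (Or.inl h)) (fun h => Or.inr (Or.inr (Or.inl h)))
    have a1 : j + 1 ∈ S ∨ j ∈ S → j + 1 ∈ S ∨ j ∈ S ∨ j - 1 ∈ S ∨ j - 1 - 1 ∈ S :=
      fun h => h.elim Or.inl (fun h => Or.inr (Or.inl h))
    have a2 : j - 1 ∈ S ∨ j - 1 - 1 ∈ S → j + 1 ∈ S ∨ j ∈ S ∨ j - 1 ∈ S ∨ j - 1 - 1 ∈ S :=
      fun h => Or.inr (Or.inr h)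
    have hplus : (Sum.inl (j + 1) : FlowerVert n m) ∈ M.verts → j + 1 ∈ S ∨ j ∈ S := by
      intro h
      rcases hU _ h with h | h
      · exact Or.inl h
      · right; simpa using h
    have hminus : (Sum.inl (j - 1) : FlowerVert n m) ∈ M.verts → j - 1 ∈ S ∨ j - 1 - 1 ∈ S :=
      fun h => hU _ h
    obtain ⟨u, hu, hadj⟩ := hdom _ hv
    unfold flowerGraph at hadj
    rw [SimpleGraph.fromRel_adj] at hadj
    obtain ⟨-, hadj⟩ := hadj
    rcases u with i' | ⟨i', x⟩
    · simp only [flowerRel] at hadj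
      rcases hadj with h | h
      · have : i' = j - 1 := by rw [h]; ring
        subst this
        exact a2 (hminus hu)
      · subst h
        exact a1 (hplus hu)
    · simp only [flowerRel, false_or] at hadj
      rcases hadj with ⟨rfl, h⟩ | ⟨h, h'⟩
      · rcases hinr _ _ hu with h1 | h1
        · rw [h] at h1
          by_cases hB : (Sum.inl (i' + 1) : FlowerVert n m) ∈ M.verts
          · exact a1 (hplus hB)
          · exact a1 (Or.inr (hSm _ (hS4 _ h1 hB)))
        · rw [h] at h1
          exact a1 (Or.inr (hSm _ (hS2 _ h1)))
      · have hi : i' = j - 1 := by rw [h]; ring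
        subst hi
        rcases hinr _ _ hu with h1 | h1
        · have h2 : m - 2 ∈ P (j - 1) := by convert h1 using 1; omega
          exact a2 (Or.inl (hSm _ (hS3 _ h2)))
        · rw [h'] at h1
          by_cases hB : (Sum.inl (j - 1) : FlowerVert n m) ∈ M.verts
          · exact a2 (hminus hB)
          · exact a2 (Or.inl (hSm _ (hS5 _ h1 hB)))
  have hn4 : n ≤ 4 * S.card := by
    have hsub : (Finset.univ : Finset (ZMod n)) ⊆
        (S.image (fun i => i - 1) ∪ S) ∪ (S.image (fun i => i + 1) ∪ S.image (fun i => i + 1 + 1)) := by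
      intro j _
      simp only [Finset.mem_union, Finset.mem_image]
      rcases hall j with h | h | h | h
      · exact Or.inl (Or.inl ⟨_, h, by ring⟩)
      · exact Or.inl (Or.inr h)
      · exact Or.inr (Or.inl ⟨_, h, by ring⟩)
      · exact Or.inr (Or.inr ⟨_, h, by ring⟩)
    have h1 := Finset.card_le_card hsub
    rw [Finset.card_univ, ZMod.card] at h1
    have h2 := Finset.card_union_le (S.image (fun i => i - 1) ∪ S)
      (S.image (fun i => i + 1) ∪ S.image (fun i => i + 1 + 1))
    have h3 := Finset.card_union_le (S.image (fun i => i - 1)) S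
    have h4 := Finset.card_union_le (S.image (fun i => i + 1)) (S.image (fun i => i + 1 + 1))
    have h5 := Finset.card_image_le (s := S) (f := fun i => i - 1)
    have h6 := Finset.card_image_le (s := S) (f := fun i => i + 1)
    have h7 := Finset.card_image_le (s := S) (f := fun i => i + 1 + 1)
    omega
  have hsum2 : n * k + S.card ≤ ∑ i, (P i).card := by
    calc n * k + S.card = ∑ i : ZMod n, (k + if k + 1 ≤ (P i).card then 1 else 0) := by
          rw [Finset.sum_add_distrib, hSdef, Finset.card_filter]; simp [ZMod.card]
      _ ≤ _ := Finset.sum_le_sum fun i _ => by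
          have := hPk i
          split_ifs <;> omega
  omega

/-- A family of disjoint edges gives a matching. -/
theorem matching_of_edges {V ι : Type*} [Fintype ι] (G : SimpleGraph V) (F : ι × Bool → V)
    (hF : Function.Injective F) (hadj : ∀ a, G.Adj (F (a, false)) (F (a, true))) :
    (∃ M : G.Subgraph, M.verts = Set.range F ∧ M.IsMatching) ∧
      (Set.range F).ncard = 2 * Fintype.card ι := by
  refine ⟨⟨{ verts := Set.range F
             Adj := fun v w => ∃ a b, v = F (a, b) ∧ w = F (a, !b)
             adj_sub := ?_
             edge_vert := ?_
             symm := ?_ }, rfl, ?_⟩, ?_⟩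
  · rintro v w ⟨a, b, rfl, rfl⟩
    cases b
    · exact hadj a
    · exact (hadj a).symm
  · rintro v w ⟨a, b, rfl, rfl⟩
    exact ⟨_, rfl⟩
  · try constructor
    rintro v w ⟨a, b, rfl, rfl⟩
    exact ⟨a, !b, rfl, by simp⟩
  · rintro v ⟨⟨a, b⟩, rfl⟩
    refine ⟨F (a, !b), ⟨a, b, rfl, rfl⟩, ?_⟩
    rintro w ⟨a', b', h, rfl⟩
    have := hF h
    simp only [Prod.mk.injEq] at this
    obtain ⟨rfl, rfl⟩ := this
    rfl
  · rw [← Set.image_univ, Set.ncard_image_of_injective _ hF, Set.ncard_univ,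
      Nat.card_eq_fintype_card, Fintype.card_prod, Fintype.card_bool, mul_comm]

/-- The edges used in the optimal construction. -/
def flowerPairs (n m k q c : ℕ) (hc : 4 * k + c ≤ m - 2 + 2) :
    ((ZMod n × Fin k) ⊕ Fin q) × Bool → FlowerVert n m
  | (Sum.inl (i, t), b) => Sum.inr (i, ⟨4 * t.val + c + b.toNat, by
      have := t.2; have := b.toNat_le; omega⟩)
  | (Sum.inr t, b) => Sum.inl ((min (4 * t.val) (n - 2) + b.toNat : ℕ) : ZMod n)

theorem flowerPairs_spec (n m k q c : ℕ) (hn : 3 ≤ n) (hc : 4 * k + c ≤ m - 2 + 2)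
    (hq : 4 * q ≤ n + 3) :
    Function.Injective (flowerPairs n m k q c hc) ∧
      ∀ a, (flowerGraph n m).Adj (flowerPairs n m k q c hc (a, false))
        (flowerPairs n m k q c hc (a, true)) := by
  have : Fact (1 < n) := ⟨by omega⟩
  constructor
  · rintro ⟨⟨i, t⟩ | t, b⟩ ⟨⟨i', t'⟩ | t', b'⟩ h
    · simp only [flowerPairs, Sum.inr.injEq, Prod.mk.injEq, Fin.mk.injEq] at h
      obtain ⟨rfl, h⟩ := h
      have : t = t' ∧ b = b' := by
        rw [Fin.ext_iff]
        cases b <;> cases b' <;> simp at h ⊢ <;> omega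
      rw [this.1, this.2]
    · simp [flowerPairs] at h
    · simp [flowerPairs] at h
    · simp only [flowerPairs, Sum.inl.injEq] at h
      rw [ZMod.natCast_eq_natCast_iff'] at h
      have h1 := b.toNat_le
      have h2 := b'.toNat_le
      rw [Nat.mod_eq_of_lt (by omega), Nat.mod_eq_of_lt (by omega)] at h
      have : t = t' ∧ b = b' := by
        have := t.2
        have := t'.2
        rw [Fin.ext_iff]
        cases b <;> cases b' <;> simp at h ⊢ <;> omega
      rw [this.1, this.2]
  · rintro (⟨i, t⟩ | t)
    · unfold flowerGraph
      rw [SimpleGraph.fromRel_adj]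
      refine ⟨by simp [flowerPairs], Or.inl ?_⟩
      simp [flowerPairs, flowerRel]
    · unfold flowerGraph
      rw [SimpleGraph.fromRel_adj]
      refine ⟨by simp [flowerPairs], Or.inl ?_⟩
      simp [flowerPairs, flowerRel]

theorem flower_upper1 (n m k : ℕ) (hn : 3 ≤ n) (hk : 1 ≤ k) (hm : m = 4 * k + 1) :
    ∃ D, IsPairedDominating (flowerGraph n m) D ∧ D.ncard = 2 * (n * k) := by
  have : NeZero n := ⟨by omega⟩
  have hc : 4 * k + 0 ≤ m - 2 + 2 := by omega
  obtain ⟨h1, h2⟩ := flowerPairs_spec n m k 0 0 hn hc (by omega)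
  obtain ⟨h3, h4⟩ := matching_of_edges _ _ h1 h2
  refine ⟨_, ⟨?_, h3⟩, by rw [h4]; simp [ZMod.card]⟩
  have hmem : ∀ (i : ZMod n) (x : Fin (m - 2)), x.val % 4 ≤ 1 →
      (Sum.inr (i, x) : FlowerVert n m) ∈ Set.range (flowerPairs n m k 0 0 hc) := by
    intro i x hx
    have hx2 := x.2
    have ht : x.val / 4 < k := by omega
    rcases (by omega : x.val % 4 = 0 ∨ x.val % 4 = 1) with h | h
    · refine ⟨(Sum.inl (i, ⟨x.val / 4, ht⟩), false), ?_⟩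
      simp only [flowerPairs, Sum.inr.injEq, Prod.mk.injEq, Fin.ext_iff, true_and, Bool.toNat_false]
      omega
    · refine ⟨(Sum.inl (i, ⟨x.val / 4, ht⟩), true), ?_⟩
      simp only [flowerPairs, Sum.inr.injEq, Prod.mk.injEq, Fin.ext_iff, true_and, Bool.toNat_true]
      omega
  rintro (i | ⟨i, x⟩) hv
  · refine ⟨Sum.inr (i, ⟨0, by omega⟩), hmem _ _ (by simp), ?_⟩
    unfold flowerGraph
    rw [SimpleGraph.fromRel_adj]
    exact ⟨by simp, Or.inr (by simp [flowerRel])⟩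
  · have hx2 := x.2
    have hx : ¬ x.val % 4 ≤ 1 := fun h => hv (hmem i x h)
    rcases (by omega : x.val % 4 = 2 ∨ x.val % 4 = 3) with h | h
    · refine ⟨Sum.inr (i, ⟨x.val - 1, by omega⟩), hmem _ _ (by simp only; omega), ?_⟩
      unfold flowerGraph
      rw [SimpleGraph.fromRel_adj]
      refine ⟨by simp only [ne_eq, Sum.inr.injEq, Prod.mk.injEq, Fin.ext_iff]; omega, Or.inl ?_⟩
      simp only [flowerRel, true_and]; omega
    · refine ⟨Sum.inr (i, ⟨x.val + 1, by omega⟩), hmem _ _ (by simp only; omega), ?_⟩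
      unfold flowerGraph
      rw [SimpleGraph.fromRel_adj]
      refine ⟨by simp only [ne_eq, Sum.inr.injEq, Prod.mk.injEq, Fin.ext_iff]; omega, Or.inr ?_⟩
      simp only [flowerRel, true_and]

theorem flower_upper2 (n m k : ℕ) (hn : 3 ≤ n) (hm : m = 4 * k + 2) :
    ∃ D, IsPairedDominating (flowerGraph n m) D ∧ D.ncard = 2 * (n * k + (n + 3) / 4) := by
  have : Fact (1 < n) := ⟨by omega⟩
  have : NeZero n := ⟨by omega⟩
  have hc : 4 * k + 1 ≤ m - 2 + 2 := by omega
  obtain ⟨h1, h2⟩ := flowerPairs_spec n m k ((n + 3) / 4) 1 hn hc (by omega)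
  obtain ⟨h3, h4⟩ := matching_of_edges _ _ h1 h2
  refine ⟨_, ⟨?_, h3⟩, by rw [h4]; simp [ZMod.card]⟩
  have hmem : ∀ (i : ZMod n) (x : Fin (m - 2)), 1 ≤ x.val % 4 → x.val % 4 ≤ 2 →
      (Sum.inr (i, x) : FlowerVert n m) ∈ Set.range (flowerPairs n m k ((n + 3) / 4) 1 hc) := by
    intro i x hx hx'
    have hx2 := x.2
    have ht : x.val / 4 < k := by omega
    rcases (by omega : x.val % 4 = 1 ∨ x.val % 4 = 2) with h | h
    · refine ⟨(Sum.inl (i, ⟨x.val / 4, ht⟩), false), ?_⟩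
      simp only [flowerPairs, Sum.inr.injEq, Prod.mk.injEq, Fin.ext_iff, true_and, Bool.toNat_false]
      omega
    · refine ⟨(Sum.inl (i, ⟨x.val / 4, ht⟩), true), ?_⟩
      simp only [flowerPairs, Sum.inr.injEq, Prod.mk.injEq, Fin.ext_iff, true_and, Bool.toNat_true]
      omega
  have hmem2 : ∀ t b, t < (n + 3) / 4 → b ≤ 1 →
      (Sum.inl ((min (4 * t) (n - 2) + b : ℕ) : ZMod n) : FlowerVert n m) ∈
        Set.range (flowerPairs n m k ((n + 3) / 4) 1 hc) := by
    intro t b ht hb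
    rcases (by omega : b = 0 ∨ b = 1) with rfl | rfl
    · exact ⟨(Sum.inr ⟨t, ht⟩, false), rfl⟩
    · exact ⟨(Sum.inr ⟨t, ht⟩, true), rfl⟩
  rintro (i | ⟨i, x⟩) hv
  · have adj1 : ∀ i : ZMod n, (flowerGraph n m).Adj (Sum.inl i) (Sum.inl (i + 1)) := by
      intro i
      unfold flowerGraph
      rw [SimpleGraph.fromRel_adj]
      exact ⟨by simp, Or.inl (by simp [flowerRel])⟩
    obtain ⟨a, ha, rfl⟩ : ∃ a : ℕ, a < n ∧ (a : ZMod n) = i :=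
      ⟨i.val, i.val_lt, ZMod.natCast_zmod_val i⟩
    have up : ∀ t b, t < (n + 3) / 4 → b ≤ 1 → min (4 * t) (n - 2) + b + 1 = a →
        ∃ u ∈ Set.range (flowerPairs n m k ((n + 3) / 4) 1 hc),
          (flowerGraph n m).Adj u (Sum.inl (a : ZMod n)) := by
      intro t b ht hb h
      refine ⟨_, hmem2 t b ht hb, ?_⟩
      rw [← h, Nat.cast_add _ 1, Nat.cast_one]
      exact adj1 _
    have down : ∀ t, t < (n + 3) / 4 → min (4 * t) (n - 2) = a + 1 →
        ∃ u ∈ Set.range (flowerPairs n m k ((n + 3) / 4) 1 hc),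
          (flowerGraph n m).Adj u (Sum.inl (a : ZMod n)) := by
      intro t ht h
      refine ⟨_, hmem2 t 0 ht (by omega), ?_⟩
      rw [h, add_zero, Nat.cast_add a 1, Nat.cast_one]
      exact (adj1 _).symm
    by_cases hlast : a = n - 1
    · have h0 : ((a : ZMod n)) + 1 = ((min (4 * 0) (n - 2) + 0 : ℕ) : ZMod n) := by
        have : ((a + 1 : ℕ) : ZMod n) = 0 := by
          rw [hlast, Nat.sub_add_cancel (by omega)]; exact ZMod.natCast_self n
        push_cast at this
        simp [this]
      refine ⟨_, hmem2 0 0 (by omega) (by omega), ?_⟩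
      rw [← h0]
      exact (adj1 _).symm
    · rcases (by omega : a % 4 = 0 ∨ a % 4 = 1 ∨ a % 4 = 2 ∨ a % 4 = 3) with h | h | h | h
      · exfalso
        apply hv
        convert hmem2 (a / 4) 0 (by omega) (by omega) using 3
        omega
      · by_cases hlt : 4 * (a / 4) ≤ n - 2
        · exfalso
          apply hv
          convert hmem2 (a / 4) 1 (by omega) (by omega) using 3
          omega
        · omega
      · exact up (a / 4) 1 (by omega) (by omega) (by omega)
      · by_cases hlt : a + 1 ≤ n - 2
        · exact down ((a + 1) / 4) (by omega) (by omega)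
        · exfalso
          apply hv
          convert hmem2 ((a + 1) / 4) 0 (by omega) (by omega) using 3
          omega
  · have hx2 := x.2
    have hx : ¬ (1 ≤ x.val % 4 ∧ x.val % 4 ≤ 2) := fun h => hv (hmem i x h.1 h.2)
    rcases (by omega : x.val % 4 = 3 ∨ x.val % 4 = 0) with h | h
    · refine ⟨Sum.inr (i, ⟨x.val - 1, by omega⟩), hmem _ _ (by simp only; omega)
        (by simp only; omega), ?_⟩
      unfold flowerGraph
      rw [SimpleGraph.fromRel_adj]
      refine ⟨by simp only [ne_eq, Sum.inr.injEq, Prod.mk.injEq, Fin.ext_iff]; omega, Or.inl ?_⟩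
      simp only [flowerRel, true_and]; omega
    · refine ⟨Sum.inr (i, ⟨x.val + 1, by omega⟩), hmem _ _ (by simp only; omega)
        (by simp only; omega), ?_⟩
      unfold flowerGraph
      rw [SimpleGraph.fromRel_adj]
      refine ⟨by simp only [ne_eq, Sum.inr.injEq, Prod.mk.injEq, Fin.ext_iff]; omega, Or.inr ?_⟩
      simp only [flowerRel, true_and]

theorem pairedDomNum_eq {V : Type*} (G : SimpleGraph V) (c : ℕ)
    (h1 : ∃ D, IsPairedDominating G D ∧ D.ncard = c)
    (h2 : ∀ D, IsPairedDominating G D → c ≤ D.ncard) : pairedDomNum G = c := by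
  unfold pairedDomNum
  apply le_antisymm
  · exact Nat.sInf_le h1
  · apply le_csInf ⟨c, h1⟩
    rintro b ⟨D, hD, rfl⟩
    exact h2 D hD

theorem flower_pairedDomNum_mod4_12 (n m : ℕ) (hn : 3 ≤ n) (hm : 3 ≤ m)
    (h : m % 4 = 1 ∨ m % 4 = 2) :
    (pairedDomNum (flowerGraph n m) : ℤ) = 2 * ⌈((n : ℚ) * m - n) / 4⌉ := by
  obtain ⟨k, hk, hmk⟩ : ∃ k, 1 ≤ k ∧ (m = 4 * k + 1 ∨ m = 4 * k + 2) :=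
    ⟨m / 4, by omega, by omega⟩
  rcases hmk with hmk | hmk
  · rw [pairedDomNum_eq _ _ (flower_upper1 n m k hn hk hmk)
      (fun D hD => (flower_lower n m k hn hk (Or.inl hmk) D hD).1)]
    have : ((n : ℚ) * m - n) / 4 = ((n * k : ℤ) : ℚ) := by
      rw [hmk]; push_cast; ring
    rw [this, Int.ceil_intCast]; push_cast; ring
  · rw [pairedDomNum_eq _ _ (flower_upper2 n m k hn hmk)
      (fun D hD => (flower_lower n m k hn hk (Or.inr hmk) D hD).2 hmk)]
    have : ⌈((n : ℚ) * m - n) / 4⌉ = ((n * k + (n + 3) / 4 : ℕ) : ℤ) := by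
      rw [Int.ceil_eq_iff]
      obtain ⟨q, hq⟩ : ∃ q, q = (n + 3) / 4 := ⟨_, rfl⟩
      have ha : (4 * q : ℚ) ≤ n + 3 := by exact_mod_cast (by omega : 4 * q ≤ n + 3)
      have hb : (n : ℚ) ≤ 4 * q := by exact_mod_cast (by omega : n ≤ 4 * q)
      rw [← hq, hmk]; push_cast
      constructor <;> linarith
    rw [this]; push_cast; ring
end

section
/- If m ≡ 1 or 2 (mod 6) and m, n ≥ 3, then γ_p^2(f_{n×m}) = 2·⌈(nm - n)/6⌉. -/
section helpers

open Classical

theorem fl_adj_inl {n m : ℕ} (hm : 7 ≤ m) {x : FlowerVert n m} {i : ZMod n}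
    (h : (flowerGraph n m).Adj x (Sum.inl i)) :
    x = Sum.inl (i + 1) ∨ x = Sum.inl (i - 1) ∨ x = Sum.inr (i, ⟨0, by omega⟩) ∨
      x = Sum.inr (i - 1, ⟨m - 3, by omega⟩) := by
  rw [flowerGraph, SimpleGraph.fromRel_adj] at h
  obtain ⟨-, h⟩ := h
  rcases x with a | ⟨a, j⟩
  · rcases h with h | h
    · right; left
      simp only [flowerRel] at h
      simp [h]
    · left
      simp only [flowerRel] at h
      simp [h]
  · rcases h with h | h
    · simp [flowerRel] at h
    · simp only [flowerRel] at h
      rcases h with ⟨h1, h2⟩ | ⟨h1, h2⟩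
      · right; right; left
        simp [h1, Fin.ext_iff, h2]
      · right; right; right
        simp [h1, Fin.ext_iff, h2]

theorem fl_adj_inr {n m : ℕ} {x : FlowerVert n m} {i : ZMod n} {j : Fin (m - 2)}
    (h : (flowerGraph n m).Adj x (Sum.inr (i, j))) :
    (j.val = 0 ∧ x = Sum.inl i) ∨ (j.val = m - 3 ∧ x = Sum.inl (i + 1)) ∨
      (∃ j' : Fin (m - 2), x = Sum.inr (i, j') ∧ (j'.val = j.val + 1 ∨ j.val = j'.val + 1)) := by
  rw [flowerGraph, SimpleGraph.fromRel_adj] at h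
  obtain ⟨-, h⟩ := h
  rcases x with a | ⟨a, j'⟩
  · rcases h with h | h
    · simp only [flowerRel] at h
      rcases h with ⟨h1, h2⟩ | ⟨h1, h2⟩
      · left; simp [h1, h2]
      · right; left; simp [h1, h2]
    · simp [flowerRel] at h
  · right; right
    refine ⟨j', ?_⟩
    rcases h with h | h
    · simp only [flowerRel] at h
      exact ⟨by simp [h.1], Or.inr h.2⟩
    · simp only [flowerRel] at h
      exact ⟨by simp [h.1], Or.inl h.2⟩

theorem fl_edist_two {V : Type*} {G : SimpleGraph V} {u v : V} (h : G.edist u v ≤ (2 : ℕ)) :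
    u = v ∨ G.Adj u v ∨ ∃ w, G.Adj u w ∧ G.Adj w v := by
  have hne : G.edist u v ≠ ⊤ := ne_top_of_le_ne_top (ENat.natCast_ne_top 2) h
  obtain ⟨p, hp⟩ := SimpleGraph.exists_walk_of_edist_ne_top hne
  rw [← hp] at h
  have h2 : p.length ≤ 2 := by exact_mod_cast h
  cases p with
  | nil => left; rfl
  | cons h1 q =>
    cases q with
    | nil => right; left; exact h1
    | cons h3 r =>
      cases r with
      | nil => right; right; exact ⟨_, h1, h3⟩
      | cons h4 r' => simp at h2

theorem fl_edist_le_of_adj {V : Type*} {G : SimpleGraph V} {u v : V} (h : G.Adj u v) :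
    G.edist u v ≤ (2 : ℕ) := by
  refine le_trans (SimpleGraph.Walk.edist_le (SimpleGraph.Walk.cons h SimpleGraph.Walk.nil)) ?_
  simp

theorem fl_edist_le_of_adj2 {V : Type*} {G : SimpleGraph V} {u v w : V} (h : G.Adj u v)
    (h' : G.Adj v w) : G.edist u w ≤ (2 : ℕ) := by
  refine le_trans (SimpleGraph.Walk.edist_le
    (SimpleGraph.Walk.cons h (SimpleGraph.Walk.cons h' SimpleGraph.Walk.nil))) ?_
  simp

/-- `u_i` in `D`. -/
def flDu {n m : ℕ} (D : Set (FlowerVert n m)) (i : ZMod n) : Prop := Sum.inl i ∈ D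

/-- `v_{i,q+1}` in `D`. -/
def flDv {n m : ℕ} (D : Set (FlowerVert n m)) (i : ZMod n) (q : ℕ) : Prop :=
  ∃ h : q < m - 2, Sum.inr (i, ⟨q, h⟩) ∈ D

theorem flDv_mk {n m : ℕ} {D : Set (FlowerVert n m)} {i : ZMod n} {j : Fin (m - 2)}
    (h : Sum.inr (i, j) ∈ D) : flDv D i j.val := ⟨j.2, h⟩

theorem fl_cov_v {n m : ℕ} (hm : 7 ≤ m) {D : Set (FlowerVert n m)}
    (hD : ∀ v ∉ D, ∃ u ∈ D, (flowerGraph n m).edist u v ≤ (2 : ℕ)) (i : ZMod n) (q : ℕ)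
    (hq : q < m - 2) :
    (∃ q', flDv D i q' ∧ q' ≤ q + 2 ∧ q ≤ q' + 2) ∨ (q ≤ 1 ∧ flDu D i) ∨
    (m - 4 ≤ q ∧ flDu D (i + 1)) ∨
    (q = 0 ∧ (flDu D (i - 1) ∨ flDu D (i + 1) ∨ flDv D (i - 1) (m - 3))) ∨
    (q = m - 3 ∧ (flDu D i ∨ flDu D (i + 2) ∨ flDv D (i + 1) 0)) := by
  by_cases hv : (Sum.inr (i, ⟨q, hq⟩) : FlowerVert n m) ∈ D
  · left; exact ⟨q, ⟨hq, hv⟩, by omega, by omega⟩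
  obtain ⟨u, hu, hd⟩ := hD _ hv
  rcases fl_edist_two hd with rfl | h | ⟨w, h1, h2⟩
  · exact absurd hu hv
  · rcases fl_adj_inr h with ⟨h3, rfl⟩ | ⟨h3, rfl⟩ | ⟨j', rfl, h3⟩ <;> simp only at h3
    · right; left; exact ⟨by omega, hu⟩
    · right; right; left; exact ⟨by omega, hu⟩
    · left; exact ⟨j', flDv_mk hu, by omega, by omega⟩
  · rcases fl_adj_inr h2 with ⟨h, rfl⟩ | ⟨h, rfl⟩ | ⟨j', rfl, h⟩ <;> simp only at h
    · rcases fl_adj_inl hm h1 with rfl | rfl | rfl | rfl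
      · right; right; right; left; exact ⟨h, Or.inr (Or.inl hu)⟩
      · right; right; right; left; exact ⟨h, Or.inl hu⟩
      · left; exact ⟨_, flDv_mk hu, by simp, by simp; omega⟩
      · right; right; right; left; exact ⟨h, Or.inr (Or.inr (flDv_mk hu))⟩
    · rcases fl_adj_inl hm h1 with rfl | rfl | rfl | rfl
      · right; right; right; right
        refine ⟨h, Or.inr (Or.inl ?_)⟩
        have : i + 1 + 1 = i + 2 := by ring
        rw [this] at hu; exact hu
      · right; right; right; right
        refine ⟨h, Or.inl ?_⟩
        rw [add_sub_cancel_right] at hu; exact hu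
      · right; right; right; right; exact ⟨h, Or.inr (Or.inr (flDv_mk hu))⟩
      · left
        rw [add_sub_cancel_right] at hu
        exact ⟨_, flDv_mk hu, by simp; omega, by simp; omega⟩
    · rcases fl_adj_inr h1 with ⟨h', rfl⟩ | ⟨h', rfl⟩ | ⟨j'', rfl, h'⟩
      · right; left; exact ⟨by omega, hu⟩
      · right; right; left; exact ⟨by omega, hu⟩
      · left; exact ⟨_, flDv_mk hu, by omega, by omega⟩

theorem fl_cov_u {n m : ℕ} (hm : 7 ≤ m) {D : Set (FlowerVert n m)}
    (hD : ∀ v ∉ D, ∃ u ∈ D, (flowerGraph n m).edist u v ≤ (2 : ℕ)) (i : ZMod n) :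
    flDu D i ∨ flDu D (i + 1) ∨ flDu D (i - 1) ∨ flDu D (i + 2) ∨ flDu D (i - 2) ∨
    flDv D i 0 ∨ flDv D i 1 ∨ flDv D (i - 1) (m - 3) ∨ flDv D (i - 1) (m - 4) ∨
    flDv D (i + 1) 0 ∨ flDv D i (m - 3) ∨ flDv D (i - 2) (m - 3) ∨ flDv D (i - 1) 0 := by
  by_cases hv : (Sum.inl i : FlowerVert n m) ∈ D
  · left; exact hv
  obtain ⟨u, hu, hd⟩ := hD _ hv
  have e1 : i + 1 + 1 = i + 2 := by ring
  have e2 : i - 1 - 1 = i - 2 := by ring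
  have e3 : i - 1 + 1 = i := by ring
  have e4 : i + 1 - 1 = i := by ring
  rcases fl_edist_two hd with rfl | h | ⟨w, h1, h2⟩
  · exact absurd hu hv
  · rcases fl_adj_inl hm h with rfl | rfl | rfl | rfl
    · have : flDu D (i + 1) := hu
      tauto
    · have : flDu D (i - 1) := hu
      tauto
    · have : flDv D i 0 := flDv_mk hu
      tauto
    · have : flDv D (i - 1) (m - 3) := flDv_mk hu
      tauto
  · rcases fl_adj_inl hm h2 with rfl | rfl | rfl | rfl
    · rcases fl_adj_inl hm h1 with rfl | rfl | rfl | rfl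
      · have : flDu D (i + 2) := by rw [e1] at hu; exact hu
        tauto
      · have : flDu D i := by rw [e4] at hu; exact hu
        tauto
      · have : flDv D (i + 1) 0 := flDv_mk hu
        tauto
      · have : flDv D i (m - 3) := by rw [e4] at hu; exact flDv_mk hu
        tauto
    · rcases fl_adj_inl hm h1 with rfl | rfl | rfl | rfl
      · have : flDu D i := by rw [e3] at hu; exact hu
        tauto
      · have : flDu D (i - 2) := by rw [e2] at hu; exact hu
        tauto
      · have : flDv D (i - 1) 0 := flDv_mk hu
        tauto
      · have : flDv D (i - 2) (m - 3) := by rw [e2] at hu; exact flDv_mk hu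
        tauto
    · rcases fl_adj_inr h1 with ⟨h', rfl⟩ | ⟨h', rfl⟩ | ⟨j'', rfl, h'⟩
      · have : flDu D i := hu
        tauto
      · have : flDu D (i + 1) := hu
        tauto
      · have h3 : j''.val = 1 := by simp only at h'; omega
        have : flDv D i 1 := by have := flDv_mk hu; rwa [h3] at this
        tauto
    · rcases fl_adj_inr h1 with ⟨h', rfl⟩ | ⟨h', rfl⟩ | ⟨j'', rfl, h'⟩
      · have : flDu D (i - 1) := hu
        tauto
      · have : flDu D i := by rw [e3] at hu; exact hu
        tauto
      · have h3 : j''.val = m - 4 := by have := j''.2; simp only at h'; omega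
        have : flDv D (i - 1) (m - 4) := by have := flDv_mk hu; rwa [h3] at this
        tauto

theorem fl_cover (T : Finset ℕ) (a b : ℕ)
    (h : ∀ p, a ≤ p → p ≤ b → ∃ s ∈ T, p ≤ s + 3 ∧ s ≤ p + 2) : b + 1 ≤ a + 6 * T.card := by
  have h1 : Finset.Icc a b ⊆ T.biUnion (fun s => Finset.Icc (s - 2) (s + 3)) := by
    intro p hp
    rw [Finset.mem_Icc] at hp
    obtain ⟨s, hs, h2, h3⟩ := h p hp.1 hp.2
    rw [Finset.mem_biUnion]
    exact ⟨s, hs, Finset.mem_Icc.2 ⟨by omega, by omega⟩⟩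
  have h2 := (Finset.card_le_card h1).trans (Finset.card_biUnion_le_card_mul _ _ 6 (by
    intro s _; rw [Nat.card_Icc]; omega))
  rw [Nat.card_Icc] at h2
  omega

/-- If `s₀ ∈ T` does not help covering `[a,b]`. -/
theorem fl_cover_erase (T : Finset ℕ) (a b s₀ : ℕ) (hs : s₀ ∈ T)
    (h0 : s₀ + 3 < a ∨ b + 2 < s₀)
    (h : ∀ p, a ≤ p → p ≤ b → ∃ s ∈ T, p ≤ s + 3 ∧ s ≤ p + 2) :
    b + 7 ≤ a + 6 * T.card := by
  have h1 := fl_cover (T.erase s₀) a b (by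
    intro p hp hp'
    obtain ⟨s, hs, h2, h3⟩ := h p hp hp'
    refine ⟨s, Finset.mem_erase.2 ⟨?_, hs⟩, h2, h3⟩
    rintro rfl
    omega)
  have h2 := Finset.card_erase_add_one hs
  omega

/-- Colour of an oriented edge: the petal it touches, or the inner edge it is. -/
def flCol {n m : ℕ} : FlowerVert n m × FlowerVert n m → ZMod n ⊕ ZMod n
  | (Sum.inl i, Sum.inl _) => Sum.inr i
  | (Sum.inl _, Sum.inr (i', _)) => Sum.inl i'
  | (Sum.inr (i, _), _) => Sum.inl i

/-- Position of an oriented edge in its petal. -/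
def flPos {n m : ℕ} : FlowerVert n m × FlowerVert n m → ℕ
  | (Sum.inl _, Sum.inl _) => 0
  | (Sum.inl _, Sum.inr (_, j)) => if j.val = 0 then 0 else m - 2
  | (Sum.inr (_, j), _) => j.val + 1

theorem fl_rel_antisymm {n m : ℕ} (hn : 3 ≤ n) {x y : FlowerVert n m}
    (h : flowerRel n m x y) (h' : flowerRel n m y x) : False := by
  rcases x with a | ⟨a, j⟩ <;> rcases y with b | ⟨b, j'⟩ <;> simp only [flowerRel] at h h'
  · subst h
    have h2 : ((2 : ℕ) : ZMod n) = 0 := by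
      have : a + 0 = a + (1 + 1) := by rw [add_zero, ← add_assoc]; exact h'
      have := add_left_cancel this
      rw [this]; norm_num
    rw [ZMod.natCast_eq_zero_iff] at h2
    have := Nat.le_of_dvd (by norm_num) h2
    omega
  · omega

theorem fl_structure {n m : ℕ} [NeZero n] (hn : 3 ≤ n) (hm : 7 ≤ m) {D : Set (FlowerVert n m)}
    (M : (flowerGraph n m).Subgraph) (hMD : M.verts = D) (hM : M.IsMatching) :
    ∃ (T : ZMod n → Finset ℕ) (B : Set (ZMod n)),
      (∀ i q, flDv D i q → q + 1 ∈ T i ∨ q ∈ T i) ∧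
      (∀ i, flDu D i → 0 ∈ T i ∨ m - 2 ∈ T (i - 1) ∨ i ∈ B ∨ i - 1 ∈ B) ∧
      2 * (∑ i, ((T i).card + if i ∈ B then 1 else 0)) ≤ D.ncard := by
  set F : Finset (FlowerVert n m × FlowerVert n m) :=
    Finset.univ.filter (fun e => flowerRel n m e.1 e.2 ∧ M.Adj e.1 e.2) with hF
  have memF : ∀ x y, (x, y) ∈ F ↔ flowerRel n m x y ∧ M.Adj x y := by
    intro x y; simp [hF]
  have rel : ∀ x y, M.Adj x y → flowerRel n m x y ∨ flowerRel n m y x := by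
    intro x y h
    have := M.adj_sub h
    rw [flowerGraph, SimpleGraph.fromRel_adj] at this
    exact this.2
  refine ⟨fun i => (F.filter (fun e => flCol e = Sum.inl i)).image flPos,
    {i | M.Adj (Sum.inl i) (Sum.inl (i + 1))}, ?_, ?_, ?_⟩
  · rintro i q ⟨hq, hv⟩
    rw [← hMD] at hv
    obtain ⟨w, hw, -⟩ := hM hv
    simp only [Finset.mem_image, Finset.mem_filter]
    rcases rel _ _ hw with hr | hr
    · left
      exact ⟨(_, w), ⟨(memF _ _).2 ⟨hr, hw⟩, rfl⟩, rfl⟩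
    · have hmem := (memF _ _).2 ⟨hr, hw.symm⟩
      rcases w with a | ⟨a, j⟩
      · simp only [flowerRel] at hr
        by_cases h0 : q = 0
        · right
          refine ⟨_, ⟨hmem, rfl⟩, ?_⟩
          simp [flPos, h0]
        · left
          refine ⟨_, ⟨hmem, rfl⟩, ?_⟩
          simp only [flPos, h0, if_false]
          omega
      · simp only [flowerRel] at hr
        right
        refine ⟨_, ⟨hmem, ?_⟩, ?_⟩
        · simp [flCol, hr.1]
        · simp [flPos, hr.2]
  · intro i hv
    have hv : Sum.inl i ∈ M.verts := by rw [hMD]; exact hv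
    obtain ⟨w, hw, -⟩ := hM hv
    simp only [Finset.mem_image, Finset.mem_filter]
    rcases rel _ _ hw with hr | hr
    · have hmem := (memF _ _).2 ⟨hr, hw⟩
      rcases w with a | ⟨a, j⟩
      · simp only [flowerRel] at hr
        subst hr
        right; right; left; exact hw
      · simp only [flowerRel] at hr
        rcases hr with ⟨h1, h2⟩ | ⟨h1, h2⟩
        · left
          exact ⟨_, ⟨hmem, by simp [flCol, h1]⟩, by simp [flPos, h2]⟩
        · right; left
          refine ⟨_, ⟨hmem, by simp [flCol, h1]⟩, ?_⟩
          have : j.val ≠ 0 := by omega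
          simp [flPos, this]
    · rcases w with a | ⟨a, j⟩
      · simp only [flowerRel] at hr
        right; right; right
        have : i - 1 = a := by rw [hr]; ring
        simp only [Set.mem_ofPred_eq, this]
        rw [← hr]
        exact hw.symm
      · simp [flowerRel] at hr
  · have uniq : ∀ x y z, M.Adj x y → M.Adj x z → y = z := by
      intro x y z h1 h2
      exact (hM (M.edge_vert h1)).unique h1 h2
    have hcard : 2 * F.card ≤ D.ncard := by
      have h1 : (F.image Prod.fst).card = F.card := by
        apply Finset.card_image_of_injOn
        rintro ⟨x, y⟩ h1 ⟨x', y'⟩ h2 h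
        simp only at h
        subst h
        have h1 := (memF _ _).1 h1
        have h2 := (memF _ _).1 h2
        rw [uniq _ _ _ h1.2 h2.2]
      have h2 : (F.image Prod.snd).card = F.card := by
        apply Finset.card_image_of_injOn
        rintro ⟨x, y⟩ h1 ⟨x', y'⟩ h2 h
        simp only at h
        subst h
        have h1 := (memF _ _).1 h1
        have h2 := (memF _ _).1 h2
        rw [uniq _ _ _ h1.2.symm h2.2.symm]
      have h3 : Disjoint (F.image Prod.fst) (F.image Prod.snd) := by
        rw [Finset.disjoint_left]
        intro x hx hx'
        simp only [Finset.mem_image, Prod.exists] at hx hx'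
        obtain ⟨a, b, hab, rfl⟩ := hx
        obtain ⟨c, d, hcd, h⟩ := hx'
        subst h
        have h1 := (memF _ _).1 hab
        have h2 := (memF _ _).1 hcd
        have := uniq _ _ _ h1.2 h2.2.symm
        subst this
        exact fl_rel_antisymm hn h1.1 h2.1
      have h4 : ((F.image Prod.fst ∪ F.image Prod.snd : Finset _) : Set (FlowerVert n m)) ⊆ D := by
        intro x hx
        rw [← hMD]
        simp only [Finset.coe_union, Finset.coe_image, Set.mem_union, Set.mem_image,
          Finset.mem_coe, Prod.exists] at hx
        rcases hx with ⟨a, b, hab, rfl⟩ | ⟨a, b, hab, rfl⟩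
        · exact M.edge_vert ((memF _ _).1 hab).2
        · exact M.edge_vert ((memF _ _).1 hab).2.symm
      have h5 := Set.ncard_le_ncard h4 (Set.toFinite _)
      rw [Set.ncard_coe_finset, Finset.card_union_of_disjoint h3, h1, h2] at h5
      omega
    refine le_trans ?_ hcard
    apply Nat.mul_le_mul_left
    have h6 := Finset.card_eq_sum_card_fiberwise (s := F) (t := Finset.univ) (f := flCol)
      (by intro x _; simp)
    rw [h6, Fintype.sum_sum_type, ← Finset.sum_add_distrib]
    apply Finset.sum_le_sum
    intro i _
    apply add_le_add
    · exact Finset.card_image_le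
    · split_ifs with hi
      · apply Finset.card_pos.2
        refine ⟨(Sum.inl i, Sum.inl (i + 1)), Finset.mem_filter.2 ⟨(memF _ _).2 ⟨?_, hi⟩, rfl⟩⟩
        simp [flowerRel]
      · exact Nat.zero_le _

theorem fl_T_cov {n m : ℕ} (hm : 7 ≤ m) {D : Set (FlowerVert n m)}
    (hD : ∀ v ∉ D, ∃ u ∈ D, (flowerGraph n m).edist u v ≤ (2 : ℕ))
    (T : ZMod n → Finset ℕ)
    (hT : ∀ i q, flDv D i q → q + 1 ∈ T i ∨ q ∈ T i) (i : ZMod n) (p : ℕ) (h1 : 1 ≤ p)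
    (h2 : p ≤ m - 2)
    (hu : p ≤ 2 → ¬ flDu D i) (hu' : m - 3 ≤ p → ¬ flDu D (i + 1))
    (ha : p = 1 → ¬ (flDu D (i - 1) ∨ flDu D (i + 1) ∨ flDv D (i - 1) (m - 3)))
    (hb : p = m - 2 → ¬ (flDu D i ∨ flDu D (i + 2) ∨ flDv D (i + 1) 0)) :
    ∃ s ∈ T i, p ≤ s + 3 ∧ s ≤ p + 2 := by
  rcases fl_cov_v hm hD i (p - 1) (by omega) with ⟨q, hq, h3, h4⟩ | ⟨h, h'⟩ | ⟨h, h'⟩ | ⟨h, h'⟩ | ⟨h, h'⟩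
  · rcases hT i q hq with h | h
    · exact ⟨_, h, by omega, by omega⟩
    · exact ⟨_, h, by omega, by omega⟩
  · exact absurd h' (hu (by omega))
  · exact absurd h' (hu' (by omega))
  · exact absurd h' (ha (by omega))
  · exact absurd h' (hb (by omega))

theorem fl_lower1 {n m k : ℕ} [NeZero n] (hn : 3 ≤ n) (hk : 1 ≤ k) (hm : m = 6 * k + 1)
    {D : Set (FlowerVert n m)} (hD : IsKDistPairedDominating (flowerGraph n m) 2 D) :
    2 * (n * k) ≤ D.ncard := by
  obtain ⟨hD, M, hMD, hM⟩ := hD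
  obtain ⟨T, B, hT, hU, hc⟩ := fl_structure hn (by omega) M hMD hM
  refine le_trans ?_ hc
  apply Nat.mul_le_mul_left
  have : ∑ i : ZMod n, k = n * k := by simp [ZMod.card]
  rw [← this]
  apply Finset.sum_le_sum
  intro i _
  have := fl_cover (T i) 3 (m - 4) (by
    intro p h1 h2
    apply fl_T_cov (by omega) hD T hT i p <;> omega)
  omega

theorem fl_lower2 {n m k : ℕ} [NeZero n] (hn : 3 ≤ n) (hk : 1 ≤ k) (hm : m = 6 * k + 2)
    {D : Set (FlowerVert n m)} (hD : IsKDistPairedDominating (flowerGraph n m) 2 D) :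
    2 * (n * k + (n + 5) / 6) ≤ D.ncard := by
  obtain ⟨hD, M, hMD, hM⟩ := hD
  obtain ⟨T, B, hT, hU, hc⟩ := fl_structure hn (by omega) M hMD hM
  refine le_trans ?_ hc
  apply Nat.mul_le_mul_left
  have cov := fun i p => fl_T_cov (by omega) hD T hT i p
  have base : ∀ i, k ≤ (T i).card := by
    intro i
    have := fl_cover (T i) 3 (m - 4) (by
      intro p h1 h2
      apply cov i p <;> omega)
    omega
  set X : Finset (ZMod n) := Finset.univ.filter (fun i => k < (T i).card ∨ i ∈ B) with hX
  have memX : ∀ i, i ∉ X → (T i).card = k ∧ i ∉ B := by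
    intro i hi
    simp only [hX, Finset.mem_filter, Finset.mem_univ, true_and, not_or] at hi
    have := base i
    exact ⟨by omega, hi.2⟩
  have t0 : ∀ i, i ∉ X → 0 ∉ T i := by
    intro i hi h0
    have := fl_cover_erase (T i) 4 (m - 4) 0 h0 (by omega) (by
      intro p h1 h2
      apply cov i p <;> omega)
    have := memX i hi
    omega
  have t1 : ∀ i, i ∉ X → m - 2 ∉ T i := by
    intro i hi h0
    have := fl_cover_erase (T i) 3 (m - 5) (m - 2) h0 (by omega) (by
      intro p h1 h2
      apply cov i p <;> omega)
    have := memX i hi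
    omega
  have nu : ∀ i, i ∉ X → i - 1 ∉ X → ¬ flDu D i := by
    intro i h1 h2 h
    rcases hU i h with h | h | h | h
    · exact t0 _ h1 h
    · exact t1 _ h2 h
    · exact (memX _ h1).2 h
    · exact (memX _ h2).2 h
  have nv0 : ∀ i, i ∉ X → ¬ flDu D i → ¬ flDu D (i + 1) → ¬ flDv D i 0 := by
    intro i hi h1 h2 h
    have hc := (memX i hi).1
    rcases hT _ _ h with h | h
    · have := fl_cover_erase (T i) 5 (m - 3) (0 + 1) h (by omega) (by
        intro p h3 h4
        apply cov i p <;> first | omega | (intro _; assumption))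
      omega
    · exact t0 i hi h
  have nv1 : ∀ i, i ∉ X → ¬ flDu D i → ¬ flDu D (i + 1) → ¬ flDv D i (m - 3) := by
    intro i hi h1 h2 h
    have hc := (memX i hi).1
    rcases hT _ _ h with h | h
    · have e : m - 3 + 1 = m - 2 := by omega
      rw [e] at h
      exact t1 i hi h
    · have := fl_cover_erase (T i) 2 (m - 6) (m - 3) h (by omega) (by
        intro p h3 h4
        apply cov i p <;> first | omega | (intro _; assumption))
      omega
  have full : ∀ i, i ∉ X → ¬ flDu D (i - 1) → ¬ flDu D i → ¬ flDu D (i + 1) → ¬ flDu D (i + 2) →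
      ¬ flDv D (i - 1) (m - 3) → ¬ flDv D (i + 1) 0 →
      ¬ flDv D i 1 ∧ ¬ flDv D i (m - 4) := by
    intro i hi h1 h2 h3 h4 h5 h6
    have hc := (memX i hi).1
    have hall : ∀ p, 1 ≤ p → p ≤ m - 2 → ∃ s ∈ T i, p ≤ s + 3 ∧ s ≤ p + 2 := by
      intro p hp hp'
      apply cov i p hp hp' <;> intro _ <;> first | assumption | tauto
    have key : ∀ s ∈ T i, 3 ≤ s ∧ s ≤ m - 5 := by
      intro s hs
      constructor
      · by_contra hlt
        have := fl_cover_erase (T i) 6 (m - 2) s hs (by omega) (by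
          intro p h3 h4; exact hall p (by omega) (by omega))
        omega
      · by_contra hlt
        have := fl_cover_erase (T i) 1 (m - 7) s hs (by omega) (by
          intro p h3 h4; exact hall p (by omega) (by omega))
        omega
    constructor
    · intro h
      rcases hT _ _ h with h | h <;> have := key _ h <;> omega
    · intro h
      rcases hT _ _ h with h | h <;> have := key _ h <;> omega
  have main : ∀ j : ZMod n, ∃ i ∈ X, j ∈ ({i - 2, i - 1, i, i + 1, i + 2, i + 3} : Finset (ZMod n)) := by
    intro j
    by_contra hcon
    push Not at hcon
    have nx : ∀ i, j ∈ ({i - 2, i - 1, i, i + 1, i + 2, i + 3} : Finset (ZMod n)) → i ∉ X :=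
      fun i h h' => hcon i h' h
    have x2 : j + 2 ∉ X := nx _ (by simp)
    have x1 : j + 1 ∉ X := nx _ (by simp)
    have x0 : j ∉ X := nx _ (by simp)
    have y1 : j - 1 ∉ X := nx _ (by simp)
    have y2 : j - 2 ∉ X := nx _ (by simp)
    have y3 : j - 3 ∉ X := nx _ (by simp)
    have e1 : j + 2 - 1 = j + 1 := by ring
    have e2 : j + 1 - 1 = j := by ring
    have e3 : j - 1 - 1 = j - 2 := by ring
    have e4 : j - 2 - 1 = j - 3 := by ring
    have e5 : j + 1 + 1 = j + 2 := by ring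
    have e6 : j - 1 + 1 = j := by ring
    have e7 : j - 2 + 1 = j - 1 := by ring
    have e8 : j - 1 + 2 = j + 1 := by ring
    have u2 : ¬ flDu D (j + 2) := nu _ x2 (by rwa [e1])
    have u1 : ¬ flDu D (j + 1) := nu _ x1 (by rwa [e2])
    have u0 : ¬ flDu D j := nu _ x0 y1
    have w1 : ¬ flDu D (j - 1) := nu _ y1 (by rwa [e3])
    have w2 : ¬ flDu D (j - 2) := nu _ y2 (by rwa [e4])
    have a1 := nv0 (j + 1) x1 u1 (by rwa [e5])
    have a0 := nv0 j x0 u0 u1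
    have b0 := nv1 j x0 u0 u1
    have c1 := nv0 (j - 1) y1 w1 (by rwa [e6])
    have d1 := nv1 (j - 1) y1 w1 (by rwa [e6])
    have d2 := nv1 (j - 2) y2 w2 (by rwa [e7])
    have f0 := full j x0 w1 u0 u1 u2 d1 a1
    have f1 := full (j - 1) y1 (by rwa [e3]) w1 (by rwa [e6]) (by rwa [e8]) (by rwa [e3])
      (by rwa [e6])
    have := fl_cov_u (by omega) hD j
    tauto
  have hcX : n ≤ 6 * X.card := by
    have h1 : (Finset.univ : Finset (ZMod n)) ⊆
        X.biUnion (fun i => {i - 2, i - 1, i, i + 1, i + 2, i + 3}) := by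
      intro j _
      rw [Finset.mem_biUnion]
      exact main j
    have h2 := (Finset.card_le_card h1).trans (Finset.card_biUnion_le_card_mul _ _ 6 (by
      intro s _; exact Finset.card_le_six))
    rw [Finset.card_univ, ZMod.card] at h2
    omega
  have hs : n * k + X.card ≤ ∑ i, ((T i).card + if i ∈ B then 1 else 0) := by
    have h1 : ∑ i : ZMod n, (k + if i ∈ X then 1 else 0) = n * k + X.card := by
      rw [Finset.sum_add_distrib]
      simp [ZMod.card]
    rw [← h1]
    apply Finset.sum_le_sum
    intro i _
    have hb := base i
    by_cases hi : i ∈ X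
    · have hi' := hi
      simp only [hX, Finset.mem_filter, Finset.mem_univ, true_and] at hi'
      rw [if_pos hi]
      rcases hi' with h | h
      · omega
      · rw [if_pos h]; omega
    · rw [if_neg hi]; omega
  omega

theorem fl_pairs {V : Type*} {G : SimpleGraph V} {ι : Type*} [Fintype ι] (a b : ι → V)
    (hadj : ∀ i, G.Adj (a i) (b i)) (ha : Function.Injective a) (hb : Function.Injective b)
    (hab : ∀ i j, a i ≠ b j)
    (hdom : ∀ v, v ∉ Set.range a ∪ Set.range b →
      ∃ u ∈ Set.range a ∪ Set.range b, G.edist u v ≤ (2 : ℕ)) :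
    ∃ D : Set V, IsKDistPairedDominating G 2 D ∧ D.ncard = 2 * Fintype.card ι := by
  refine ⟨Set.range a ∪ Set.range b, ⟨hdom, ?_⟩, ?_⟩
  · refine ⟨{ verts := Set.range a ∪ Set.range b
              Adj := fun x y => ∃ i, (x = a i ∧ y = b i) ∨ (x = b i ∧ y = a i)
              adj_sub := ?_
              edge_vert := ?_
              symm := ?_ }, rfl, ?_⟩
    · rintro x y ⟨i, ⟨rfl, rfl⟩ | ⟨rfl, rfl⟩⟩
      · exact hadj i
      · exact (hadj i).symm
    · rintro x y ⟨i, ⟨rfl, rfl⟩ | ⟨rfl, rfl⟩⟩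
      · exact Or.inl ⟨i, rfl⟩
      · exact Or.inr ⟨i, rfl⟩
    · refine ⟨?_⟩
      rintro x y ⟨i, h⟩
      exact ⟨i, by tauto⟩
    · rintro x (⟨i, rfl⟩ | ⟨i, rfl⟩)
      · refine ⟨b i, ⟨i, Or.inl ⟨rfl, rfl⟩⟩, ?_⟩
        rintro y ⟨j, ⟨h, rfl⟩ | ⟨h, rfl⟩⟩
        · rw [ha h]
        · exact absurd h (hab _ _)
      · refine ⟨a i, ⟨i, Or.inr ⟨rfl, rfl⟩⟩, ?_⟩
        rintro y ⟨j, ⟨h, rfl⟩ | ⟨h, rfl⟩⟩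
        · exact absurd h.symm (hab _ _)
        · rw [hb h]
  · rw [Set.ncard_union_eq]
    · rw [← Set.image_univ, ← Set.image_univ, Set.ncard_image_of_injective _ ha,
        Set.ncard_image_of_injective _ hb, Set.ncard_univ, Nat.card_eq_fintype_card]
      omega
    · rw [Set.disjoint_left]
      rintro _ ⟨i, rfl⟩ ⟨j, h⟩
      exact hab _ _ h.symm

theorem fl_adj_vv {n m : ℕ} (i : ZMod n) (j j' : Fin (m - 2)) (h : j'.val = j.val + 1) :
    (flowerGraph n m).Adj (Sum.inr (i, j)) (Sum.inr (i, j')) := by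
  rw [flowerGraph, SimpleGraph.fromRel_adj]
  refine ⟨?_, Or.inl ⟨rfl, h⟩⟩
  intro he
  simp only [Sum.inr.injEq, Prod.mk.injEq, Fin.ext_iff] at he
  omega

theorem fl_adj_uu {n m : ℕ} (hn : 3 ≤ n) (i : ZMod n) :
    (flowerGraph n m).Adj (Sum.inl i) (Sum.inl (i + 1)) := by
  have : Fact (1 < n) := ⟨by omega⟩
  rw [flowerGraph, SimpleGraph.fromRel_adj]
  refine ⟨?_, Or.inl rfl⟩
  simp

theorem fl_adj_uv {n m : ℕ} (i : ZMod n) (j : Fin (m - 2)) (h : j.val = 0) :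
    (flowerGraph n m).Adj (Sum.inl i) (Sum.inr (i, j)) := by
  rw [flowerGraph, SimpleGraph.fromRel_adj]
  exact ⟨by simp, Or.inl (Or.inl ⟨rfl, h⟩)⟩

theorem fl_edist_vv {n m : ℕ} (i : ZMod n) (j j' : Fin (m - 2)) (h : j.val ≤ j'.val)
    (h' : j'.val ≤ j.val + 2) :
    (flowerGraph n m).edist (Sum.inr (i, j)) (Sum.inr (i, j')) ≤ (2 : ℕ) := by
  have hj := j'.2
  have : j'.val = j.val ∨ j'.val = j.val + 1 ∨ j'.val = j.val + 2 := by omega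
  rcases this with h1 | h1 | h1
  · have : j' = j := Fin.ext h1
    simp [this]
  · exact fl_edist_le_of_adj (fl_adj_vv i j j' h1)
  · exact fl_edist_le_of_adj2 (fl_adj_vv i j ⟨j.val + 1, by omega⟩ rfl)
      (fl_adj_vv i _ j' (by simp [h1]))

theorem fl_edist_uu {n m : ℕ} (hn : 3 ≤ n) (x y : ℕ) (h : x ≤ y) (h' : y ≤ x + 2) :
    (flowerGraph n m).edist (Sum.inl (x : ZMod n)) (Sum.inl (y : ZMod n)) ≤ (2 : ℕ) := by
  have : y = x ∨ y = x + 1 ∨ y = x + 2 := by omega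
  rcases this with rfl | rfl | rfl
  · simp
  · rw [Nat.cast_add, Nat.cast_one]
    exact fl_edist_le_of_adj (fl_adj_uu hn _)
  · have e : ((x + 2 : ℕ) : ZMod n) = (x : ZMod n) + 1 + 1 := by push_cast; ring
    rw [e]
    exact fl_edist_le_of_adj2 (fl_adj_uu hn _) (fl_adj_uu hn _)

theorem fl_cast_inj {n x y : ℕ} (hx : x < n) (hy : y < n) (h : (x : ZMod n) = (y : ZMod n)) :
    x = y := by
  rw [ZMod.natCast_eq_natCast_iff'] at h
  rwa [Nat.mod_eq_of_lt hx, Nat.mod_eq_of_lt hy] at h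

theorem fl_upper {n m k c t : ℕ} [NeZero n] (hn : 3 ≤ n) (hk : 1 ≤ k)
    (hc : c = 1 ∨ c = 2) (hm : m = 6 * k + c) (p : Fin t → ℕ) (hp : ∀ s, p s + 1 < n)
    (sep : ∀ s s', s < s' → p s + 2 ≤ p s')
    (hu : c = 2 → ∀ i : ZMod n, ∃ s,
      (flowerGraph n m).edist (Sum.inl (p s : ZMod n)) (Sum.inl i) ≤ (2 : ℕ) ∨
      (flowerGraph n m).edist (Sum.inl ((p s + 1 : ℕ) : ZMod n)) (Sum.inl i) ≤ (2 : ℕ)) :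
    ∃ D : Set (FlowerVert n m), IsKDistPairedDominating (flowerGraph n m) 2 D ∧
      D.ncard = 2 * (n * k + t) := by
  have hb : ∀ q : Fin k, 6 * q.val + c + 1 < m - 2 := fun q => by have := q.2; omega
  have hb' : ∀ q : Fin k, 6 * q.val + c < m - 2 := fun q => by have := q.2; omega
  have psep : ∀ s s', s ≠ s' → p s + 2 ≤ p s' ∨ p s' + 2 ≤ p s := by
    intro s s' h
    rcases lt_or_gt_of_ne h with h | h
    · exact Or.inl (sep _ _ h)
    · exact Or.inr (sep _ _ h)
  set a : (ZMod n × Fin k) ⊕ Fin t → FlowerVert n m := fun x => match x with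
    | Sum.inl (i, q) => Sum.inr (i, ⟨6 * q.val + c, hb' q⟩)
    | Sum.inr s => Sum.inl ((p s : ℕ) : ZMod n) with ha
  set b : (ZMod n × Fin k) ⊕ Fin t → FlowerVert n m := fun x => match x with
    | Sum.inl (i, q) => Sum.inr (i, ⟨6 * q.val + c + 1, hb q⟩)
    | Sum.inr s => Sum.inl ((p s + 1 : ℕ) : ZMod n) with hbd
  have hcard : 2 * (n * k + t) = 2 * Fintype.card ((ZMod n × Fin k) ⊕ Fin t) := by
    simp [ZMod.card]
  have ma : ∀ x, a x ∈ Set.range a ∪ Set.range b :=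
    fun x => Set.mem_union_left _ (Set.mem_range_self x)
  have mb : ∀ x, b x ∈ Set.range a ∪ Set.range b :=
    fun x => Set.mem_union_right _ (Set.mem_range_self x)
  rw [hcard]
  apply fl_pairs a b
  · rintro (⟨i, q⟩ | s)
    · exact fl_adj_vv _ _ _ rfl
    · simp only [ha, hbd]
      rw [Nat.cast_add, Nat.cast_one]
      exact fl_adj_uu hn _
  · rintro (⟨i, q⟩ | s) (⟨i', q'⟩ | s') h <;> simp [ha, Fin.ext_iff] at h ⊢
    · exact h
    · by_contra hne
      have := fl_cast_inj (by have := hp s; omega) (by have := hp s'; omega) h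
      have := psep s s' (fun h => hne (by rw [h]))
      omega
  · rintro (⟨i, q⟩ | s) (⟨i', q'⟩ | s') h <;>
      simp only [hbd, Sum.inr.injEq, Sum.inl.injEq, Prod.mk.injEq, Fin.ext_iff, reduceCtorEq] at h ⊢
    · exact ⟨h.1, by omega⟩
    · by_contra hne
      have := fl_cast_inj (hp s) (hp s') h
      have := psep s s' (fun h => hne (by rw [h]))
      omega
  · rintro (⟨i, q⟩ | s) (⟨i', q'⟩ | s') h <;>
      simp only [ha, hbd, Sum.inr.injEq, Sum.inl.injEq, Prod.mk.injEq, Fin.ext_iff, reduceCtorEq] at h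
    · omega
    · have := fl_cast_inj (by have := hp s; omega) (hp s') h
      by_cases hne : s = s'
      · subst hne; omega
      · have := psep s s' hne
        omega
  · rintro (i | ⟨i, j⟩) -
    · rcases hc with hc | hc
      · refine ⟨a (Sum.inl (i, ⟨0, hk⟩)), ma (Sum.inl (i, ⟨0, hk⟩)), ?_⟩
        rw [SimpleGraph.edist_comm]
        refine fl_edist_le_of_adj2 (fl_adj_uv i ⟨0, by omega⟩ rfl) (fl_adj_vv _ _ _ ?_)
        simp [hc]
      · obtain ⟨s, h | h⟩ := hu hc i
        · exact ⟨a (Sum.inr s), ma (Sum.inr s), h⟩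
        · exact ⟨b (Sum.inr s), mb (Sum.inr s), h⟩
    · have hj := j.2
      have hq : (j.val + 2 - c) / 6 < k := by omega
      by_cases hr : (j.val + 2 - c) % 6 ≤ 2
      · refine ⟨a (Sum.inl (i, ⟨_, hq⟩)), ma (Sum.inl (i, ⟨_, hq⟩)), ?_⟩
        rw [SimpleGraph.edist_comm]
        exact fl_edist_vv _ _ _ (by simp only; omega) (by simp only; omega)
      · refine ⟨b (Sum.inl (i, ⟨_, hq⟩)), mb (Sum.inl (i, ⟨_, hq⟩)), ?_⟩
        exact fl_edist_vv _ _ _ (by simp only; omega) (by simp only; omega)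

theorem fl_upper2 {n m k : ℕ} [NeZero n] (hn : 3 ≤ n) (hk : 1 ≤ k) (hm : m = 6 * k + 2) :
    ∃ D : Set (FlowerVert n m), IsKDistPairedDominating (flowerGraph n m) 2 D ∧
      D.ncard = 2 * (n * k + (n + 5) / 6) := by
  refine fl_upper (c := 2) (t := (n + 5) / 6) hn hk (Or.inr rfl) hm
    (fun s => min (6 * s.val) (n - 2)) ?_ ?_ ?_
  · intro s; omega
  · intro s s' h
    have h1 : s.val < s'.val := h
    have := s'.2
    omega
  · intro _ i
    obtain ⟨j, hj, rfl⟩ : ∃ j : ℕ, j < n ∧ (j : ZMod n) = i :=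
      ⟨i.val, ZMod.val_lt i, ZMod.natCast_zmod_val i⟩
    by_cases h1 : j % 6 ≤ 3
    · refine ⟨⟨j / 6, by omega⟩, ?_⟩
      by_cases h2 : j % 6 = 0 ∧ j + 2 ≤ n
      · left
        exact fl_edist_uu hn _ _ (by simp only; omega) (by simp only; omega)
      · right
        exact fl_edist_uu hn _ _ (by simp only; omega) (by simp only; omega)
    · by_cases h2 : 6 * (j / 6 + 1) < n
      · refine ⟨⟨j / 6 + 1, by omega⟩, ?_⟩
        left
        rw [SimpleGraph.edist_comm]
        exact fl_edist_uu hn _ _ (by simp only; omega) (by simp only; omega)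
      · refine ⟨⟨0, by omega⟩, ?_⟩
        left
        rw [SimpleGraph.edist_comm]
        have e : ((min (6 * 0) (n - 2) : ℕ) : ZMod n) = ((n : ℕ) : ZMod n) := by simp
        simp only
        rw [e]
        exact fl_edist_uu hn _ _ (by omega) (by omega)

end helpers

theorem flower_twoDistPairedDomNum_mod6_12 (n m : ℕ) (hn : 3 ≤ n) (hm : 3 ≤ m)
    (h : m % 6 = 1 ∨ m % 6 = 2) :
    (kDistPairedDomNum (flowerGraph n m) 2 : ℤ) = 2 * ⌈((n : ℚ) * m - n) / 6⌉ := by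
  have : NeZero n := ⟨by omega⟩
  rcases h with h | h
  · obtain ⟨k, hk⟩ : ∃ k, m = 6 * k + 1 := ⟨m / 6, by omega⟩
    have h1 : kDistPairedDomNum (flowerGraph n m) 2 = 2 * (n * k) := by
      apply IsLeast.csInf_eq
      refine ⟨?_, ?_⟩
      · exact fl_upper (c := 1) (t := 0) hn (by omega) (Or.inl rfl) hk (fun s => s.elim0)
          (fun s => s.elim0) (fun s => s.elim0) (by intro h; omega)
      · rintro _ ⟨D, hD, rfl⟩
        exact fl_lower1 hn (by omega) hk hD
    have h2 : ((n : ℚ) * m - n) / 6 = ((n * k : ℕ) : ℤ) := by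
      rw [hk]; push_cast; ring
    rw [h1, h2, Int.ceil_intCast]
    push_cast; ring
  · obtain ⟨k, hk⟩ : ∃ k, m = 6 * k + 2 := ⟨m / 6, by omega⟩
    have h1 : kDistPairedDomNum (flowerGraph n m) 2 = 2 * (n * k + (n + 5) / 6) := by
      apply IsLeast.csInf_eq
      refine ⟨fl_upper2 hn (by omega) hk, ?_⟩
      rintro _ ⟨D, hD, rfl⟩
      exact fl_lower2 hn (by omega) hk hD
    have h2 : ⌈((n : ℚ) * m - n) / 6⌉ = ((n * k + (n + 5) / 6 : ℕ) : ℤ) := by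
      rw [Int.ceil_eq_iff]
      have h3 : ((n : ℚ) * m - n) / 6 = n * k + n / 6 := by
        rw [hk]; push_cast; ring
      rw [h3]
      generalize ht : (n + 5) / 6 = t
      have h4 : (n : ℚ) ≤ 6 * t := by
        have : n ≤ 6 * t := by omega
        exact_mod_cast this
      have h5 : (6 * t : ℚ) < n + 6 := by
        have : 6 * t < n + 6 := by omega
        exact_mod_cast this
      push_cast
      constructor <;> linarith
    rw [h1, h2]
    push_cast; ring
end
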